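/- arXiv:1404.4591 — 2 statements merged into one kernel-verified Lean document; each statement's English description precedes it below -/
import Mathlib

section
/- For every real p ≥ 1, the energy of the soliton satisfies E(Q_p) := ∫_ℝ [ (1/2)·Q_p'(x)² − (1/(p+2))·Q_p(x)^{p+2} ] dx = ((p−4)/(2(p+4))) · ∫_ℝ Q_p(x)² dx. In particular E(Q_p) = 0 if and only if p = 4. -/
open Real MeasureTheory

/-- The soliton profile `Q_p(x) = ((p+2)/2)^(1/p) * (cosh (p*x/2))^(-2/p)`. -/
noncomputable def solitonQ (p : ℝ) (x : ℝ) : ℝ :=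
  ((p + 2) / 2) ^ (1 / p) * (Real.cosh (p * x / 2)) ^ (-(2 / p))

/-!
Write `t = tanh (p x / 2)` and `s = 1 / cosh² (p x / 2)`, so that `t² = 1 - s`. Then
`Q' = -t Q` (`solitonQ_hasDerivAt`) and `Q ^ p = (p + 2) / 2 * s`, whence the energy density is
`Q² (1/2 - s)`. On the other hand `(Q² t)' = Q² ((p + 4) / 2 * s - 2)`
(`solitonQ_sq_mul_tanh_hasDerivAt`), and this has integral zero because `Q² t` and its derivative
are dominated by multiples of the integrable function `Q²`. So `∫ Q² s = 4 / (p + 4) * ∫ Q²`, which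
is the energy identity: the density equals `(p - 4) / (2 (p + 4)) * Q²` minus `2 / (p + 4)` times
`(Q² t)'`. The equivalence with `p = 4` follows since `∫ Q² > 0`.
-/

lemma solitonQ_pos {p : ℝ} (hp : 1 ≤ p) (x : ℝ) : 0 < solitonQ p x := by
  have := Real.cosh_pos (p * x / 2)
  unfold solitonQ
  positivity

lemma solitonQ_hasDerivAt {p : ℝ} (hp : 1 ≤ p) (x : ℝ) :
    HasDerivAt (solitonQ p)
      (-(sinh (p * x / 2) / cosh (p * x / 2)) * solitonQ p x) x := by
  have hc := Real.cosh_pos (p * x / 2)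
  have h1 : HasDerivAt (fun x : ℝ => p * x / 2) (p / 2) x := by
    simpa using ((hasDerivAt_id x).const_mul p).div_const 2
  have h2 := ((h1.cosh.rpow_const (p := -(2 / p)) (Or.inl hc.ne')).const_mul
    (((p + 2) / 2) ^ (1 / p)))
  refine h2.congr_deriv ?_
  rw [Real.rpow_sub_one hc.ne']
  unfold solitonQ
  field_simp

lemma solitonQ_continuous {p : ℝ} (hp : 1 ≤ p) : Continuous (solitonQ p) :=
  continuous_iff_continuousAt.2 fun x => (solitonQ_hasDerivAt hp x).continuousAt

lemma solitonQ_rpow_add_two {p : ℝ} (hp : 1 ≤ p) (x : ℝ) :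
    solitonQ p x ^ (p + 2) =
      (p + 2) / 2 * (1 / cosh (p * x / 2) ^ 2) * solitonQ p x ^ 2 := by
  have hc := Real.cosh_pos (p * x / 2)
  have hp0 : p ≠ 0 := by positivity
  have hQp : solitonQ p x ^ p = (p + 2) / 2 * (1 / cosh (p * x / 2) ^ 2) := by
    unfold solitonQ
    rw [Real.mul_rpow (by positivity) (by positivity), ← Real.rpow_mul (by positivity),
      ← Real.rpow_mul hc.le, one_div_mul_cancel hp0, Real.rpow_one,
      show -(2 / p) * p = -(2 : ℝ) by field_simp, Real.rpow_neg hc.le, Real.rpow_two, one_div]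
  rw [Real.rpow_add (solitonQ_pos hp x), hQp, Real.rpow_two]

lemma solitonQ_le {p : ℝ} (hp : 1 ≤ p) (x : ℝ) :
    solitonQ p x ≤ ((p + 2) / 2) ^ (1 / p) * (2⁻¹ : ℝ) ^ (-(2 / p)) * exp (-|x|) := by
  have hp0 : 0 < p := by positivity
  have h1 : 2⁻¹ * exp |p * x / 2| ≤ cosh (p * x / 2) := by
    rw [← Real.cosh_abs, Real.cosh_eq]
    have := Real.exp_pos (-|p * x / 2|)
    linarith
  have h2 : cosh (p * x / 2) ^ (-(2 / p)) ≤ (2⁻¹ * exp |p * x / 2|) ^ (-(2 / p)) :=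
    Real.rpow_le_rpow_of_nonpos (by positivity) h1 (by simp; positivity)
  have h3 : exp |p * x / 2| ^ (-(2 / p)) = exp (-|x|) := by
    rw [← Real.exp_mul, abs_div, abs_mul, abs_of_pos hp0, abs_of_pos (by norm_num : (0 : ℝ) < 2)]
    congr 1
    field_simp
  rw [Real.mul_rpow (by positivity) (by positivity), h3] at h2
  unfold solitonQ
  rw [mul_assoc]
  gcongr

lemma solitonQ_sq_integrable {p : ℝ} (hp : 1 ≤ p) :
    Integrable (fun x => solitonQ p x ^ 2) := by
  set C := ((p + 2) / 2) ^ (1 / p) * (2⁻¹ : ℝ) ^ (-(2 / p)) with hC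
  refine (integrable_inv_one_add_sq.const_mul (C ^ 2)).mono'
    ((solitonQ_continuous hp).pow 2).aestronglyMeasurable (.of_forall fun x => ?_)
  rw [Real.norm_of_nonneg (sq_nonneg _)]
  have hexp : exp (-|x|) ^ 2 ≤ (1 + x ^ 2)⁻¹ := by
    rw [Real.exp_neg, inv_pow]
    refine inv_anti₀ (by positivity) ?_
    have h := Real.add_one_le_exp |x|
    nlinarith [abs_nonneg x, sq_abs x]
  calc solitonQ p x ^ 2 ≤ (C * exp (-|x|)) ^ 2 :=
        pow_le_pow_left₀ (solitonQ_pos hp x).le (solitonQ_le hp x) 2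
    _ = C ^ 2 * exp (-|x|) ^ 2 := by ring
    _ ≤ C ^ 2 * (1 + x ^ 2)⁻¹ := by gcongr

lemma solitonQ_sq_mul_tanh_hasDerivAt {p : ℝ} (hp : 1 ≤ p) (x : ℝ) :
    HasDerivAt (fun x => solitonQ p x ^ 2 * (sinh (p * x / 2) / cosh (p * x / 2)))
      (solitonQ p x ^ 2 * ((p + 4) / 2 * (1 / cosh (p * x / 2) ^ 2) - 2)) x := by
  have hc := Real.cosh_pos (p * x / 2)
  have h1 : HasDerivAt (fun x : ℝ => p * x / 2) (p / 2) x := by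
    simpa using ((hasDerivAt_id x).const_mul p).div_const 2
  refine (((solitonQ_hasDerivAt hp x).pow 2).mul (h1.sinh.div h1.cosh hc.ne')).congr_deriv ?_
  have hs := Real.sinh_sq (p * x / 2)
  simp only [Pi.pow_apply, Pi.div_apply]
  generalize sinh (p * x / 2) = S at *
  generalize cosh (p * x / 2) = C at *
  field_simp
  push_cast
  linear_combination (-(p + 4)) * solitonQ p x ^ 2 * hs

lemma integral_deriv_solitonQ_sq_mul_tanh {p : ℝ} (hp : 1 ≤ p) :
    Integrable (fun x => solitonQ p x ^ 2 * ((p + 4) / 2 * (1 / cosh (p * x / 2) ^ 2) - 2)) ∧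
    ∫ x, solitonQ p x ^ 2 * ((p + 4) / 2 * (1 / cosh (p * x / 2) ^ 2) - 2) = 0 := by
  have hQ := solitonQ_sq_integrable hp
  have hc : ∀ x, cosh (p * x / 2) ≠ 0 := fun x => (Real.cosh_pos _).ne'
  have hcc : Continuous fun x : ℝ => cosh (p * x / 2) := by fun_prop
  have hsc : Continuous fun x : ℝ => sinh (p * x / 2) := by fun_prop
  have hi : Integrable
      (fun x => solitonQ p x ^ 2 * ((p + 4) / 2 * (1 / cosh (p * x / 2) ^ 2) - 2)) := by
    refine hQ.mul_bdd (c := (p + 4) / 2 + 2) ?_ (.of_forall fun x => ?_)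
    · exact (((continuous_const.div (hcc.pow 2) fun x => pow_ne_zero 2 (hc x)).const_mul _).sub
        continuous_const).aestronglyMeasurable
    · have h0 : 0 ≤ 1 / cosh (p * x / 2) ^ 2 := by positivity
      have h1 : 1 / cosh (p * x / 2) ^ 2 ≤ 1 := by
        rw [div_le_one (pow_pos (Real.cosh_pos _) 2)]
        exact one_le_pow₀ (Real.one_le_cosh _)
      rw [Real.norm_eq_abs, abs_le]
      constructor <;> nlinarith
  refine ⟨hi, integral_eq_zero_of_hasDerivAt_of_integrable
    (solitonQ_sq_mul_tanh_hasDerivAt hp) hi ?_⟩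
  refine hQ.mul_bdd (c := 1) (hsc.div hcc hc).aestronglyMeasurable (.of_forall fun x => ?_)
  rw [← Real.tanh_eq_sinh_div_cosh]
  exact (Real.abs_tanh_lt_one _).le

theorem soliton_energy (p : ℝ) (hp : 1 ≤ p) :
    (∫ x : ℝ, ((1 / 2) * (deriv (solitonQ p) x) ^ 2
        - (1 / (p + 2)) * (solitonQ p x) ^ (p + 2)))
      = ((p - 4) / (2 * (p + 4))) * ∫ x : ℝ, (solitonQ p x) ^ 2 ∧
    ((∫ x : ℝ, ((1 / 2) * (deriv (solitonQ p) x) ^ 2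
        - (1 / (p + 2)) * (solitonQ p x) ^ (p + 2))) = 0 ↔ p = 4) := by
  have hQ := solitonQ_sq_integrable hp
  obtain ⟨hi, h0⟩ := integral_deriv_solitonQ_sq_mul_tanh hp
  have key : (∫ x : ℝ, ((1 / 2) * (deriv (solitonQ p) x) ^ 2
        - (1 / (p + 2)) * (solitonQ p x) ^ (p + 2)))
      = ((p - 4) / (2 * (p + 4))) * ∫ x : ℝ, (solitonQ p x) ^ 2 := by
    have hpt : ∀ x, (1 / 2) * (deriv (solitonQ p) x) ^ 2
          - (1 / (p + 2)) * (solitonQ p x) ^ (p + 2)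
        = (p - 4) / (2 * (p + 4)) * solitonQ p x ^ 2 - 2 / (p + 4) *
          (solitonQ p x ^ 2 * ((p + 4) / 2 * (1 / cosh (p * x / 2) ^ 2) - 2)) := by
      intro x
      have hc := Real.cosh_pos (p * x / 2)
      rw [(solitonQ_hasDerivAt hp x).deriv, solitonQ_rpow_add_two hp x, mul_pow, neg_sq, div_pow,
        Real.sinh_sq]
      field_simp
      ring
    simp_rw [hpt]
    rw [integral_sub (hQ.const_mul _) (hi.const_mul _), integral_const_mul, integral_const_mul, h0]
    ring
  refine ⟨key, ?_⟩
  have hpos : 0 < ∫ x : ℝ, (solitonQ p x) ^ 2 := by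
    rw [integral_pos_iff_support_of_nonneg (fun x => sq_nonneg _) hQ]
    have : Function.support (fun x => solitonQ p x ^ 2) = Set.univ :=
      Set.eq_univ_of_forall fun x => (pow_pos (solitonQ_pos hp x) 2).ne'
    simp [this]
  have hp4 : p + 4 ≠ 0 := by positivity
  rw [key, mul_eq_zero, or_iff_left hpos.ne', div_eq_zero_iff, or_iff_left (by positivity),
    sub_eq_zero]
end

section
/- For every real γ with −1 < γ < 2, the improper integral lim_{R→∞} ∫_0^R σ^γ · sin(σ³/3 − γπ/2) dσ exists and equals −cos(π(γ−2)/3) · 3^{(γ−2)/3} · Γ((γ+1)/3). Equivalently, the generalized Scorer function value Gi_γ(0) = (1/π)·lim_{R→∞} ∫_0^R σ^γ · sin(σ³/3 − γπ/2) dσ equals −(1/π)·cos(π(γ−2)/3) · 3^{(γ−2)/3} · Γ((γ+1)/3). -/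
/-!
Put `a = (γ + 1) / 3`, so that `0 < a < 1`. The substitution `t = σ ^ 3 / 3`
(`integral_comp_cube`) reduces the claim to the classical evaluation
`∫₀^∞ t ^ (a - 1) * exp (i t) dt = Γ(a) * exp (i π a / 2)` of a conditionally convergent integral
(`tendsto_integral_rpow_mul_cexp_I`); the imaginary part of its product with `exp (-i γ π / 2)`
is the sine integral.

The conditionally convergent integral is tamed by integrating by parts with the primitive
`(1 - exp (-z t)) / z` of `exp (-z t)`: for `Re z ≥ 0`, `z ≠ 0`,
`∫₀^R t ^ (a - 1) * exp (-z t) dt` tends to `(1 - a) / z * J(z)`, where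
`J(z) = ∫₀^∞ t ^ (a - 2) * (1 - exp (-z t)) dt` (`regIntegral`) converges absolutely on the closed
right half-plane. On the open half-plane, differentiation under the integral sign gives
`J'(z) = ∫₀^∞ t ^ (a - 1) * exp (-z t) dt = (1 - a) / z * J(z)`, so that
`(1 - a) * J(z) * z ^ (a - 1)` is constant (`regIntegral_mul_cpow_eq`), with value `Γ(a)` by
`z = 1`. Dominated convergence along `z = ε - i`, `ε → 0+`, carries this identity to the boundary
point `z = -i` (`regIntegral_neg_I`).
-/

open Real MeasureTheory Filter intervalIntegral

open Set Topology

/-! ### The regularized integral -/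

lemma norm_one_sub_cexp_le_two {z : ℂ} (hz : 0 ≤ z.re) {t : ℝ} (ht : 0 ≤ t) :
    ‖1 - Complex.exp (-z * t)‖ ≤ 2 := by
  have h : ‖Complex.exp (-z * t)‖ ≤ 1 := by
    rw [Complex.norm_exp]
    simp only [Complex.mul_re, Complex.neg_re, Complex.ofReal_re, Complex.neg_im,
      Complex.ofReal_im, mul_zero, sub_zero, Real.exp_le_one_iff]
    nlinarith [mul_nonneg hz ht]
  calc _ ≤ ‖(1 : ℂ)‖ + ‖Complex.exp (-z * t)‖ := norm_sub_le _ _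
    _ ≤ 2 := by rw [norm_one]; linarith

lemma norm_one_sub_cexp_le_mul {z : ℂ} (hz : 0 ≤ z.re) {t : ℝ} (ht : 0 ≤ t) :
    ‖1 - Complex.exp (-z * t)‖ ≤ ‖z‖ * t := by
  have hd : ∀ s ∈ Icc 0 t, HasDerivWithinAt (fun s : ℝ => 1 - Complex.exp (-z * s))
      (z * Complex.exp (-z * s)) (Icc 0 t) s := by
    intro s _
    have h1 : HasDerivAt (fun s : ℝ => -z * (s : ℂ)) (-z) s := by
      simpa using (Complex.ofRealCLM.hasDerivAt (x := s)).const_mul (-z)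
    convert! (h1.cexp.const_sub 1).hasDerivWithinAt using 1
    ring
  have hb : ∀ s ∈ Icc 0 t, ‖z * Complex.exp (-z * s)‖ ≤ ‖z‖ := by
    intro s hs
    rw [norm_mul, Complex.norm_exp]
    refine mul_le_of_le_one_right (norm_nonneg _) ?_
    simp only [Complex.mul_re, Complex.neg_re, Complex.ofReal_re, Complex.neg_im,
      Complex.ofReal_im, mul_zero, sub_zero, Real.exp_le_one_iff]
    nlinarith [mul_nonneg hz hs.1]
  have := (convex_Icc 0 t).norm_image_sub_le_of_norm_hasDerivWithin_le hd hb
    (left_mem_Icc.2 ht) (right_mem_Icc.2 ht)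
  simpa [abs_of_nonneg ht] using this

/-- The integrand `t ^ (a - 2) * (1 - exp (-z t))`; for `0 < a < 1` and `Re z ≥ 0` it is absolutely
integrable on `(0, ∞)`, unlike `t ^ (a - 1) * exp (-z t)` when `Re z = 0`. -/
noncomputable def regKernel (a : ℝ) (z : ℂ) (t : ℝ) : ℂ :=
  ((t ^ (a - 2) : ℝ) : ℂ) * (1 - Complex.exp (-z * t))

/-- The integral `J(z)` of `regKernel a z` over `(0, ∞)`. -/
noncomputable def regIntegral (a : ℝ) (z : ℂ) : ℂ := ∫ t in Ioi (0 : ℝ), regKernel a z t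

/-- A bound for `regKernel a z`, uniform in `z` with `Re z ≥ 0` and `‖z‖ ≤ C`: it uses
`‖1 - exp (-z t)‖ ≤ ‖z‖ t` for `t ≤ 1` and `‖1 - exp (-z t)‖ ≤ 2` beyond. -/
noncomputable def majorant (a C : ℝ) (t : ℝ) : ℝ :=
  if t ≤ 1 then C * t ^ (a - 1) else 2 * t ^ (a - 2)

lemma regKernel_norm_le (a : ℝ) {C : ℝ} {z : ℂ} (hz : 0 ≤ z.re) (hC : ‖z‖ ≤ C) {t : ℝ}
    (ht : 0 < t) : ‖regKernel a z t‖ ≤ majorant a C t := by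
  have hp : 0 < t ^ (a - 2) := rpow_pos_of_pos ht _
  rw [regKernel, norm_mul, Complex.norm_real, norm_of_nonneg hp.le, majorant]
  split_ifs with h
  · have h1 : t ^ (a - 1) = t ^ (a - 2) * t := by
      rw [← rpow_add_one ht.ne']; ring_nf
    rw [h1]
    have := norm_one_sub_cexp_le_mul hz ht.le
    calc _ ≤ t ^ (a - 2) * (C * t) := by gcongr; exact this.trans (by gcongr)
      _ = _ := by ring
  · rw [mul_comm]
    gcongr
    exact norm_one_sub_cexp_le_two hz ht.le

lemma majorant_integrableOn {a : ℝ} (ha : 0 < a) (ha1 : a < 1) (C : ℝ) :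
    IntegrableOn (majorant a C) (Ioi 0) := by
  rw [← Ioc_union_Ioi_eq_Ioi zero_le_one]
  refine IntegrableOn.union ?_ ?_
  · have h : IntegrableOn (fun t : ℝ => C * t ^ (a - 1)) (Ioc 0 1) := by
      rw [← intervalIntegrable_iff_integrableOn_Ioc_of_le zero_le_one]
      exact (intervalIntegrable_rpow' (by linarith)).const_mul C
    refine h.congr_fun (fun t ht => ?_) measurableSet_Ioc
    simp [majorant, ht.2]
  · have h : IntegrableOn (fun t : ℝ => 2 * t ^ (a - 2)) (Ioi 1) :=
      (integrableOn_Ioi_rpow_of_lt (by linarith) one_pos).const_mul 2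
    refine h.congr_fun (fun t ht => ?_) measurableSet_Ioi
    simp [majorant, not_le.2 (mem_Ioi.1 ht)]

lemma regKernel_measurable (a : ℝ) (z : ℂ) : Measurable (regKernel a z) := by
  unfold regKernel
  fun_prop

lemma regKernel_integrableOn {a : ℝ} (ha : 0 < a) (ha1 : a < 1) {z : ℂ} (hz : 0 ≤ z.re) :
    IntegrableOn (regKernel a z) (Ioi 0) := by
  refine (majorant_integrableOn ha ha1 ‖z‖).mono' (regKernel_measurable a z).aestronglyMeasurable ?_
  filter_upwards [ae_restrict_mem measurableSet_Ioi] with t ht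
  exact regKernel_norm_le a hz le_rfl ht

lemma intervalIntegrable_ofReal_rpow {a : ℝ} (ha : 0 < a) (R : ℝ) :
    IntervalIntegrable (fun t : ℝ => ((t ^ (a - 1) : ℝ) : ℂ)) volume 0 R := by
  have h : IntervalIntegrable (fun t : ℝ => t ^ (a - 1)) volume 0 R :=
    intervalIntegrable_rpow' (by linarith)
  exact ⟨h.1.ofReal, h.2.ofReal⟩

lemma rpow_mul_cexp_intervalIntegrable {a : ℝ} (ha : 0 < a) (z : ℂ) (R : ℝ) :
    IntervalIntegrable (fun t : ℝ => ((t ^ (a - 1) : ℝ) : ℂ) * Complex.exp (-z * t))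
      volume 0 R := by
  have h : IntervalIntegrable (fun t : ℝ => ((t ^ (a - 1) : ℝ) : ℂ)) volume 0 R :=
    intervalIntegrable_ofReal_rpow ha R
  exact h.mul_continuousOn (by fun_prop)

/-! ### Integration by parts and the limit `R → ∞` -/

/-- Integration by parts with the primitive `(1 - exp (-z t)) / z`. It vanishes at `t = 0`, which
cancels the singularity of `t ^ (a - 1)` in the boundary term there. -/
lemma integral_by_parts_finite {a : ℝ} (ha : 0 < a) (ha1 : a < 1) {z : ℂ} (hz : 0 ≤ z.re)
    (hz0 : z ≠ 0) {R : ℝ} (hR : 0 < R) :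
    ∫ t in (0 : ℝ)..R, ((t ^ (a - 1) : ℝ) : ℂ) * Complex.exp (-z * t)
      = ((R ^ (a - 1) : ℝ) : ℂ) * (1 - Complex.exp (-z * R)) / z
        + (1 - a) / z * ∫ t in (0 : ℝ)..R, regKernel a z t := by
  have hK : IntervalIntegrable (regKernel a z) volume 0 R := by
    rw [intervalIntegrable_iff_integrableOn_Ioc_of_le hR.le]
    exact (regKernel_integrableOn ha ha1 hz).mono_set Ioc_subset_Ioi_self
  have hE := rpow_mul_cexp_intervalIntegrable ha z R
  set G : ℝ → ℂ := fun t => ((t ^ (a - 1) : ℝ) : ℂ) * (1 - Complex.exp (-z * t)) / z with hG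
  have hderiv : ∀ t ∈ Ioi (0 : ℝ), HasDerivAt G (((t ^ (a - 1) : ℝ) : ℂ) * Complex.exp (-z * t)
      - (1 - a) / z * regKernel a z t) t := by
    intro t ht
    have h1 : HasDerivAt (fun s : ℝ => -z * (s : ℂ)) (-z) t := by
      simpa using (Complex.ofRealCLM.hasDerivAt (x := t)).const_mul (-z)
    have h2 := (Real.hasDerivAt_rpow_const (p := a - 1) (Or.inl (ne_of_gt ht))).ofReal_comp
    convert! (h2.mul (h1.cexp.const_sub 1)).div_const z using 1
    rw [regKernel, show a - 1 - 1 = a - 2 by ring]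
    push_cast
    field_simp
    ring
  have hlim0 : Tendsto G (𝓝[>] 0) (𝓝 0) := by
    have hb : Tendsto (fun t : ℝ => t ^ a) (𝓝[>] 0) (𝓝 0) := by
      have := (continuousAt_rpow_const 0 a (Or.inr ha.le)).tendsto
      rw [zero_rpow ha.ne'] at this
      exact this.mono_left nhdsWithin_le_nhds
    refine squeeze_zero_norm' ?_ hb
    filter_upwards [self_mem_nhdsWithin] with t ht
    have ht : 0 < t := ht
    rw [hG]
    simp only [norm_div, norm_mul, Complex.norm_real, norm_of_nonneg (rpow_nonneg ht.le _)]
    rw [div_le_iff₀ (norm_pos_iff.2 hz0)]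
    have h1 : t ^ a = t ^ (a - 1) * t := by rw [← rpow_add_one ht.ne']; ring_nf
    calc _ ≤ t ^ (a - 1) * (‖z‖ * t) := by gcongr; exact norm_one_sub_cexp_le_mul hz ht.le
      _ = _ := by rw [h1]; ring
  have hlimR : Tendsto G (𝓝[<] R) (𝓝 (G R)) :=
    (hderiv R hR).continuousAt.tendsto.mono_left nhdsWithin_le_nhds
  have key := integral_eq_sub_of_hasDerivAt_of_tendsto hR (fun t ht => hderiv t ht.1)
    (hE.sub (hK.const_mul _)) hlim0 hlimR
  rw [intervalIntegral.integral_sub hE (hK.const_mul _),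
    intervalIntegral.integral_const_mul, sub_zero, sub_eq_iff_eq_add] at key
  exact key

/-- The boundary case `Re z = 0` is allowed: there the integral on the left converges only
conditionally. -/
lemma tendsto_integral_rpow_mul_cexp {a : ℝ} (ha : 0 < a) (ha1 : a < 1) {z : ℂ}
    (hz : 0 ≤ z.re) (hz0 : z ≠ 0) :
    Tendsto (fun R : ℝ => ∫ t in (0 : ℝ)..R, ((t ^ (a - 1) : ℝ) : ℂ) * Complex.exp (-z * t))
      atTop (𝓝 ((1 - a) / z * regIntegral a z)) := by
  have h1 : Tendsto (fun R : ℝ => ((R ^ (a - 1) : ℝ) : ℂ) * (1 - Complex.exp (-z * R)) / z)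
      atTop (𝓝 0) := by
    have hb : Tendsto (fun R : ℝ => R ^ (a - 1) * (2 / ‖z‖)) atTop (𝓝 0) := by
      have := tendsto_rpow_neg_atTop (y := 1 - a) (by linarith)
      simpa using this.mul_const (2 / ‖z‖)
    refine squeeze_zero_norm' ?_ hb
    filter_upwards [eventually_ge_atTop 0] with t ht
    simp only [norm_div, norm_mul, Complex.norm_real, norm_of_nonneg (rpow_nonneg ht _)]
    rw [mul_div_assoc]
    gcongr
    exact norm_one_sub_cexp_le_two hz ht
  have h2 := intervalIntegral_tendsto_integral_Ioi 0 (regKernel_integrableOn ha ha1 hz) tendsto_id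
  have h3 := h1.add (h2.const_mul ((1 - a) / z))
  rw [zero_add] at h3
  refine h3.congr' ?_
  filter_upwards [eventually_gt_atTop 0] with R hR
  exact (integral_by_parts_finite ha ha1 hz hz0 hR).symm

lemma rpow_mul_cexp_integrableOn {a : ℝ} (ha : 0 < a) {z : ℂ} (hz : 0 < z.re) :
    IntegrableOn (fun t : ℝ => ((t ^ (a - 1) : ℝ) : ℂ) * Complex.exp (-z * t)) (Ioi 0) := by
  have h := integrableOn_rpow_mul_exp_neg_mul_rpow (s := a - 1) (p := 1) (b := z.re)
    (by linarith) one_pos hz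
  refine h.mono' (by fun_prop) ?_
  filter_upwards [ae_restrict_mem measurableSet_Ioi] with t ht
  have ht : 0 < t := ht
  rw [norm_mul, Complex.norm_real, norm_of_nonneg (rpow_nonneg ht.le _), Complex.norm_exp]
  simp

lemma integral_Ioi_rpow_mul_cexp {a : ℝ} (ha : 0 < a) (ha1 : a < 1) {z : ℂ} (hz : 0 < z.re) :
    ∫ t in Ioi (0 : ℝ), ((t ^ (a - 1) : ℝ) : ℂ) * Complex.exp (-z * t)
      = (1 - a) / z * regIntegral a z := by
  refine tendsto_nhds_unique
    (intervalIntegral_tendsto_integral_Ioi 0 (rpow_mul_cexp_integrableOn ha hz) tendsto_id)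
    (tendsto_integral_rpow_mul_cexp ha ha1 hz.le ?_)
  rintro rfl
  simp at hz

/-! ### Evaluation on the half-plane and at the boundary point `-i` -/

lemma regIntegral_hasDerivAt {a : ℝ} (ha : 0 < a) (ha1 : a < 1) {z : ℂ} (hz : 0 < z.re) :
    HasDerivAt (regIntegral a) ((1 - a) / z * regIntegral a z) z := by
  rw [← integral_Ioi_rpow_mul_cexp ha ha1 hz]
  have hint := integrableOn_rpow_mul_exp_neg_mul_rpow (s := a - 1) (p := 1) (b := z.re / 2)
    (by linarith) one_pos (by linarith)
  refine (hasDerivAt_integral_of_dominated_loc_of_deriv_le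
    (s := {w : ℂ | z.re / 2 < w.re}) (F := regKernel a)
    (F' := fun w t => ((t ^ (a - 1) : ℝ) : ℂ) * Complex.exp (-w * t))
    ((isOpen_lt continuous_const Complex.continuous_re).mem_nhds
      (show z.re / 2 < z.re by linarith))
    (Eventually.of_forall fun w => (regKernel_measurable a w).aestronglyMeasurable)
    (regKernel_integrableOn ha ha1 hz.le) (by fun_prop) ?_ hint ?_).2
  · filter_upwards [ae_restrict_mem measurableSet_Ioi] with t ht w hw
    have ht : 0 < t := ht
    have hw : z.re / 2 < w.re := hw
    rw [norm_mul, Complex.norm_real, norm_of_nonneg (rpow_nonneg ht.le _), Complex.norm_exp]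
    gcongr
    simp
    gcongr
  · filter_upwards [ae_restrict_mem measurableSet_Ioi] with t ht w _
    have ht : 0 < t := ht
    have h1 : HasDerivAt (fun w : ℂ => -w * (t : ℂ)) (-t) w := by
      simpa using (hasDerivAt_id w).neg.mul_const (t : ℂ)
    convert! (h1.cexp.const_sub 1).const_mul ((t ^ (a - 2) : ℝ) : ℂ) using 1
    have h2 : t ^ (a - 1) = t ^ (a - 2) * t := by rw [← rpow_add_one ht.ne']; ring_nf
    rw [h2]
    push_cast
    ring

/-- The differential equation `J' = (1 - a) / z * J` makes the left side constant on the right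
half-plane; its value is read off at `z = 1`, where the integral is Euler's. -/
lemma regIntegral_mul_cpow_eq {a : ℝ} (ha : 0 < a) (ha1 : a < 1) {z : ℂ} (hz : 0 < z.re) :
    (1 - a) * regIntegral a z * z ^ ((a : ℂ) - 1) = Gamma a := by
  have hone : (1 - a) * regIntegral a 1 = Gamma a := by
    have h := integral_Ioi_rpow_mul_cexp ha ha1 (z := 1) (by simp)
    rw [div_one] at h
    rw [← h, Real.Gamma_eq_integral ha, ← integral_complex_ofReal]
    refine setIntegral_congr_fun measurableSet_Ioi fun t _ => ?_
    push_cast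
    rw [mul_comm]
    simp
  have hd : ∀ w ∈ {w : ℂ | 0 < w.re},
      HasDerivWithinAt (fun w => (1 - a) * regIntegral a w * w ^ ((a : ℂ) - 1)) 0
        {w : ℂ | 0 < w.re} w := by
    intro w hw
    have hw : 0 < w.re := hw
    have hw0 : w ≠ 0 := by rintro rfl; simp at hw
    have h := ((regIntegral_hasDerivAt ha ha1 hw).const_mul (1 - a : ℂ)).mul
      ((hasDerivAt_id w).cpow_const (c := (a : ℂ) - 1) (Or.inl hw))
    convert! h.hasDerivWithinAt using 1
    simp only [id, mul_one]
    rw [Complex.cpow_sub (↑a - 1) 1 hw0, Complex.cpow_one]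
    field_simp
    ring
  have hconst := (convex_halfSpace_re_gt 0).norm_image_sub_le_of_norm_hasDerivWithin_le
    (C := 0) hd (fun w _ => by simp) (x := 1) (y := z) (by simp) hz
  rw [zero_mul, norm_le_zero_iff, sub_eq_zero, Complex.one_cpow, mul_one] at hconst
  rw [hconst, hone]

/-- The boundary value of `regIntegral_mul_cpow_eq` at `z = -i`, along `z = ε - i` with `ε → 0+`. -/
lemma regIntegral_neg_I {a : ℝ} (ha : 0 < a) (ha1 : a < 1) :
    (1 - a) * regIntegral a (-Complex.I) * (-Complex.I) ^ ((a : ℂ) - 1) = Gamma a := by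
  have hz : Tendsto (fun ε : ℝ => (ε : ℂ) - Complex.I) (𝓝[>] 0) (𝓝 (-Complex.I)) := by
    have : Continuous (fun ε : ℝ => (ε : ℂ) - Complex.I) := by fun_prop
    have h := this.tendsto 0
    simp only [Complex.ofReal_zero, zero_sub] at h
    exact h.mono_left nhdsWithin_le_nhds
  have hJ : Tendsto (fun ε : ℝ => regIntegral a ((ε : ℂ) - Complex.I)) (𝓝[>] 0)
      (𝓝 (regIntegral a (-Complex.I))) := by
    refine tendsto_integral_filter_of_dominated_convergence (majorant a 2)
      (Eventually.of_forall fun ε => (regKernel_measurable a _).aestronglyMeasurable) ?_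
      (majorant_integrableOn ha ha1 2) ?_
    · filter_upwards [Ioo_mem_nhdsGT one_pos] with ε hε
      filter_upwards [ae_restrict_mem measurableSet_Ioi] with t ht
      refine regKernel_norm_le a (by simpa using hε.1.le) ?_ ht
      calc _ ≤ ‖(ε : ℂ)‖ + ‖Complex.I‖ := norm_sub_le _ _
        _ ≤ 2 := by
          rw [Complex.norm_I, Complex.norm_real, norm_of_nonneg hε.1.le]; linarith [hε.2]
    · refine Eventually.of_forall fun t => ?_
      have : Continuous fun w : ℂ => regKernel a w t := by unfold regKernel; fun_prop
      exact (this.tendsto _).comp hz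
  have hP := (continuousAt_cpow_const (b := (a : ℂ) - 1) (a := -Complex.I)
    (Or.inr (by simp))).tendsto.comp hz
  refine tendsto_nhds_unique ((hJ.const_mul (1 - a : ℂ)).mul hP) ?_
  refine tendsto_const_nhds.congr' ?_
  filter_upwards [self_mem_nhdsWithin] with ε hε
  exact (regIntegral_mul_cpow_eq ha ha1 (by simpa using hε)).symm

lemma tendsto_integral_rpow_mul_cexp_I {a : ℝ} (ha : 0 < a) (ha1 : a < 1) :
    Tendsto (fun R : ℝ => ∫ t in (0 : ℝ)..R, ((t ^ (a - 1) : ℝ) : ℂ) * Complex.exp (t * Complex.I))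
      atTop (𝓝 (Gamma a * Complex.exp ((π * a / 2 : ℝ) * Complex.I))) := by
  have h := tendsto_integral_rpow_mul_cexp ha ha1 (z := -Complex.I) (by simp) (by simp)
  -- The principal branch gives `(-i) ^ a = exp (-i π a / 2)`.
  have hp : (-Complex.I) ^ ((a : ℂ) - 1)
      * (-Complex.I * Complex.exp ((π * a / 2 : ℝ) * Complex.I)) = 1 := by
    have hI : -Complex.I ≠ 0 := by simp
    rw [← mul_assoc, Complex.cpow_sub _ _ hI, Complex.cpow_one, div_mul_cancel₀ _ hI,
      Complex.cpow_def_of_ne_zero hI, Complex.log_neg_I, ← Complex.exp_add,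
      ← Complex.exp_zero]
    congr 1
    push_cast
    ring
  have hJ := regIntegral_neg_I ha ha1
  convert! h using 2
  · simp only [neg_neg, mul_comm]
  · rw [← hJ, div_mul_eq_mul_div, eq_div_iff (by simp)]
    linear_combination (1 - (a : ℂ)) * regIntegral a (-Complex.I) * hp

/-! ### The sine integral and the cubic substitution -/

lemma tendsto_integral_rpow_mul_sin {a : ℝ} (ha : 0 < a) (ha1 : a < 1) (c : ℝ) :
    Tendsto (fun R : ℝ => ∫ t in (0 : ℝ)..R, t ^ (a - 1) * Real.sin (t - c))
      atTop (𝓝 (Gamma a * Real.sin (π * a / 2 - c))) := by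
  have h := (tendsto_integral_rpow_mul_cexp_I ha ha1).const_mul (Complex.exp ((-c : ℝ) * Complex.I))
  have h2 := (Complex.continuous_im.tendsto _).comp h
  have him : ∀ r x : ℝ, (Complex.exp ((-c : ℝ) * Complex.I)
      * ((r : ℂ) * Complex.exp (x * Complex.I))).im = r * Real.sin (x - c) := by
    intro r x
    rw [mul_left_comm, ← Complex.exp_add, ← add_mul, ← Complex.ofReal_add, Complex.im_ofReal_mul,
      Complex.exp_ofReal_mul_I_im, neg_add_eq_sub]
  convert! h2 using 2
  · rename_i R
    have hint : IntervalIntegrable (fun t : ℝ => Complex.exp ((-c : ℝ) * Complex.I)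
        * (((t ^ (a - 1) : ℝ) : ℂ) * Complex.exp (t * Complex.I))) volume 0 R :=
      ((intervalIntegrable_ofReal_rpow ha R).mul_continuousOn (by fun_prop)).const_mul _
    rw [Function.comp, ← intervalIntegral.integral_const_mul]
    have := Complex.imCLM.intervalIntegral_comp_comm hint
    simp only [Complex.imCLM_apply, him] at this
    exact this
  · rw [him]

/-- The substitution `t = σ ^ 3 / 3`. -/
lemma integral_comp_cube {γ : ℝ} (hγ₁ : -1 < γ) (c : ℝ) {R : ℝ} (hR : 0 < R) :
    ∫ σ in (0 : ℝ)..R, σ ^ γ * Real.sin (σ ^ 3 / 3 - c)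
      = (3 : ℝ) ^ ((γ - 2) / 3)
        * ∫ t in (0 : ℝ)..R ^ 3 / 3, t ^ ((γ + 1) / 3 - 1) * Real.sin (t - c) := by
  have hγ : IntervalIntegrable (fun σ : ℝ => σ ^ γ * Real.sin (σ ^ 3 / 3 - c)) volume 0 R :=
    (intervalIntegrable_rpow' hγ₁).mul_continuousOn (by fun_prop)
  have ht : ∀ T, IntervalIntegrable
      (fun t : ℝ => t ^ ((γ + 1) / 3 - 1) * Real.sin (t - c)) volume 0 T := fun T =>
    (intervalIntegrable_rpow' (by linarith)).mul_continuousOn (by fun_prop)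
  have hcongr : EqOn (fun σ : ℝ => σ ^ γ * Real.sin (σ ^ 3 / 3 - c))
      (fun σ : ℝ => ((fun t : ℝ => (3 : ℝ) ^ ((γ - 2) / 3)
        * (t ^ ((γ + 1) / 3 - 1) * Real.sin (t - c))) ∘ fun σ => σ ^ 3 / 3) σ * σ ^ 2)
      (Ioc 0 R) := by
    intro σ hσ
    have hσ : 0 < σ := hσ.1
    have h1 : σ ^ γ = (3 : ℝ) ^ ((γ - 2) / 3) * (σ ^ 3 / 3) ^ ((γ + 1) / 3 - 1) * σ ^ 2 := by
      rw [show (γ + 1) / 3 - 1 = (γ - 2) / 3 by ring, ← mul_rpow (by norm_num) (by positivity),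
        mul_div_cancel₀ _ (by norm_num), ← rpow_natCast σ 3, ← rpow_natCast σ 2,
        ← rpow_mul hσ.le, ← rpow_add hσ]
      congr 1
      push_cast
      ring
    simp only [Function.comp]
    rw [h1]
    ring
  have key := integral_comp_mul_deriv''' (a := 0) (b := R) (f := fun σ : ℝ => σ ^ 3 / 3)
    (f' := fun σ => σ ^ 2) (g := fun t : ℝ => (3 : ℝ) ^ ((γ - 2) / 3)
        * (t ^ ((γ + 1) / 3 - 1) * Real.sin (t - c))) (by fun_prop) ?_ ?_ ?_ ?_
  · norm_num at key
    rw [← key]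
    refine intervalIntegral.integral_congr_ae (Eventually.of_forall fun σ hσ => ?_)
    rw [uIoc_of_le hR.le] at hσ
    simpa using hcongr hσ
  · intro σ _
    have := ((hasDerivAt_pow 3 σ).div_const 3).hasDerivWithinAt (s := Ioi σ)
    convert! this using 1
    norm_num
  · rintro _ ⟨σ, hσ, rfl⟩
    rw [min_eq_left hR.le] at hσ
    have hσ0 : 0 < σ ^ 3 / 3 := by have := hσ.1; positivity
    exact (continuousAt_const.mul ((continuousAt_rpow_const _ _ (Or.inl hσ0.ne')).mul
      (by fun_prop))).continuousWithinAt
  · have himg : (fun σ : ℝ => σ ^ 3 / 3) '' uIcc 0 R ⊆ uIcc 0 (R ^ 3 / 3) := by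
      rintro _ ⟨σ, hσ, rfl⟩
      rw [uIcc_of_le hR.le] at hσ
      rw [uIcc_of_le (by positivity)]
      have h0 := hσ.1
      have h1 := hσ.2
      exact ⟨by positivity, show σ ^ 3 / 3 ≤ R ^ 3 / 3 by gcongr⟩
    refine IntegrableOn.mono_set ?_ himg
    rw [← intervalIntegrable_iff']
    exact (ht _).const_mul _
  · rw [uIcc_of_le hR.le, integrableOn_Icc_iff_integrableOn_Ioc]
    rw [intervalIntegrable_iff_integrableOn_Ioc_of_le hR.le] at hγ
    exact hγ.congr_fun hcongr measurableSet_Ioc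

theorem generalized_scorerGi_at_zero (γ : ℝ) (hγ₁ : -1 < γ) (hγ₂ : γ < 2) :
    Tendsto
      (fun R : ℝ => ∫ σ in (0 : ℝ)..R, σ ^ γ * Real.sin (σ ^ 3 / 3 - γ * π / 2))
      atTop
      (nhds (-Real.cos (π * (γ - 2) / 3) * (3 : ℝ) ^ ((γ - 2) / 3)
        * Real.Gamma ((γ + 1) / 3))) ∧
    Tendsto
      (fun R : ℝ => (1 / π) * ∫ σ in (0 : ℝ)..R, σ ^ γ * Real.sin (σ ^ 3 / 3 - γ * π / 2))
      atTop
      (nhds (-(1 / π) * Real.cos (π * (γ - 2) / 3) * (3 : ℝ) ^ ((γ - 2) / 3)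
        * Real.Gamma ((γ + 1) / 3))) := by
  have hmain : Tendsto
      (fun R : ℝ => ∫ σ in (0 : ℝ)..R, σ ^ γ * Real.sin (σ ^ 3 / 3 - γ * π / 2))
      atTop
      (nhds (-Real.cos (π * (γ - 2) / 3) * (3 : ℝ) ^ ((γ - 2) / 3)
        * Real.Gamma ((γ + 1) / 3))) := by
    have hT : Tendsto (fun R : ℝ => R ^ 3 / 3) atTop atTop :=
      (tendsto_pow_atTop (by norm_num)).atTop_div_const (by norm_num)
    have h := ((tendsto_integral_rpow_mul_sin (a := (γ + 1) / 3) (by linarith) (by linarith)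
      (γ * π / 2)).comp hT).const_mul ((3 : ℝ) ^ ((γ - 2) / 3))
    have htrig : Real.sin (π * ((γ + 1) / 3) / 2 - γ * π / 2) = -Real.cos (π * (γ - 2) / 3) := by
      rw [← Real.cos_pi_div_two_sub, ← Real.cos_add_pi]
      congr 1
      ring
    rw [htrig] at h
    convert! h.congr' ?_ using 2
    · ring
    · filter_upwards [eventually_gt_atTop 0] with R hR
      exact (integral_comp_cube hγ₁ _ hR).symm
  refine ⟨hmain, ?_⟩
  convert! hmain.const_mul (1 / π) using 2
  ring
end
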